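/- Let n and m be natural numbers and let d_1,…,d_n, a_1,…,a_m, b_1,…,b_m be rational numbers. Assume (not a solid torus) that m ≥ 1 or at least two of the d_i are not integers, and assume that the quantity n̄_D + N_G is positive, where n̄_D := #{ i : d_i is not an integer } and N_G := #{ j : a_j is an integer } + #{ j : b_j is an integer }. For every positive integer k set y₋(k) := −(1/k)·(1 + Σ_{i=1}^{n} ⌊d_i·k⌋ + Σ_{j=1}^{m} (⌈a_j·k⌉ − 1)) and y₊(k) := −(1/k)·(−1 + Σ_{i=1}^{n} ⌈d_i·k⌉ + Σ_{j=1}^{m} (⌊b_j·k⌋ + 1)). If y₋ ∈ ℚ is the greatest element of { y₋(k) : k a positive integer }, y₊ ∈ ℚ is the least element of { y₊(k) : k a positive integer }, and y₋ = y₊, then y₋ = y₋(1), y₊ = y₊(1), and y₋ is an integer. -/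

import Mathlib

/-!
Write `y₋(k) = -A(k)/k` and `y₊(k) = B(k)/k` with integers `A(k)`, `B(k)`. Termwise superadditivity
gives `A(k) + A(l) ≤ A(k + l) + 1`, and likewise for `B`. Let `y` be the common endpoint and `q` its
denominator. Minimality forces `A(k) = ⌈-yk⌉` and `B(k) = ⌈yk⌉` for `0 < k ≤ q`, so the defects of
superadditivity of `A` and `B` are known there: every `k ↦ ⌊dᵢk⌋` and `k ↦ ⌈dᵢk⌉` is additive on
`k + l = q`, and for `k + l < q` all the floors or all the ceilings are. If `q > 1`, the first fact
makes a non-integral `dᵢ` a half-integer and `q > 2`, and then the second fails at `k = l = 1`.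
If instead some `aⱼ` is an integer, `A` is superadditive, so `A(k)/k` is already least at `k = 1`;
an integral `bⱼ` does the same for `B`.
-/

open Set

section IntegerRange

variable {R : Type*} [Ring R]

lemma neg_mem_range_intCast {x : R} :
    -x ∈ range ((↑) : ℤ → R) ↔ x ∈ range ((↑) : ℤ → R) :=
  neg_mem_iff (H := (Int.castAddHom R).range)

/-- `q` is the denominator of `y`: the least positive integer for which `y * q` is an integer. -/
def IsDenom (y : R) (q : ℕ) : Prop :=
  IsLeast {k : ℕ | 0 < k ∧ y * k ∈ range ((↑) : ℤ → R)} q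

namespace IsDenom

variable {y : R} {q k : ℕ}

lemma notMem_range (hq : IsDenom y q) (hk : 0 < k) (hkq : k < q) :
    y * k ∉ range ((↑) : ℤ → R) :=
  fun hmem => hkq.not_ge (hq.2 ⟨hk, hmem⟩)

lemma neg (hq : IsDenom y q) : IsDenom (-y) q := by
  simpa only [IsDenom, neg_mul, neg_mem_range_intCast] using hq

end IsDenom

end IntegerRange

section FloorAdditivity

variable {R : Type*} [Ring R] [LinearOrder R] [IsStrictOrderedRing R] [FloorRing R] {x y : R}

lemma ceil_add_ceil_of_add_mem_range (hx : x ∉ range ((↑) : ℤ → R))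
    (hxy : x + y ∈ range ((↑) : ℤ → R)) : ⌈x⌉ + ⌈y⌉ = ⌈x + y⌉ + 1 := by
  obtain ⟨z, hz⟩ := hxy
  have hy : y = -x + z := by rw [hz, neg_add_cancel_left]
  have hceil := (Int.ceil_eq_floor_add_one_iff_notMem x).2 hx
  rw [← hz, hy, Int.ceil_add_intCast, Int.ceil_neg, Int.ceil_intCast]
  omega

lemma ceil_add_ceil_or_ceil_neg_add_ceil_neg (hx : x ∉ range ((↑) : ℤ → R))
    (hy : y ∉ range ((↑) : ℤ → R)) (hxy : x + y ∉ range ((↑) : ℤ → R)) :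
    ⌈x⌉ + ⌈y⌉ = ⌈x + y⌉ + 1 ∨ ⌈-x⌉ + ⌈-y⌉ = ⌈-(x + y)⌉ + 1 := by
  rw [← Int.ceil_eq_floor_add_one_iff_notMem] at hx hy hxy
  simp only [Int.ceil_neg]
  have := Int.le_floor_add x y
  have := Int.ceil_add_le x y
  omega

lemma mem_range_or_mem_range_of_floor_ceil_add (hfloor : ⌊x + y⌋ = ⌊x⌋ + ⌊y⌋)
    (hceil : ⌈x + y⌉ = ⌈x⌉ + ⌈y⌉) : x ∈ range ((↑) : ℤ → R) ∨ y ∈ range ((↑) : ℤ → R) := by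
  by_contra! ⟨hx, hy⟩
  rw [← Int.ceil_eq_floor_add_one_iff_notMem] at hx hy
  have := Int.ceil_le_floor_add_one (x + y)
  omega

lemma mem_range_of_floor_add_self (h : ⌊x + x⌋ = ⌊x⌋ + ⌊x⌋)
    (hx : x + x ∈ range ((↑) : ℤ → R)) : x ∈ range ((↑) : ℤ → R) := by
  rw [← Int.floor_eq_self_iff_mem, h, Int.cast_add] at hx
  exact ⟨⌊x⌋, mul_left_cancel₀ two_ne_zero (by rwa [two_mul, two_mul])⟩

lemma mem_range_of_ceil_add_self (h : ⌈x + x⌉ = ⌈x⌉ + ⌈x⌉)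
    (hx : x + x ∈ range ((↑) : ℤ → R)) : x ∈ range ((↑) : ℤ → R) := by
  rw [← Int.ceil_eq_self_iff_mem, h, Int.cast_add] at hx
  exact ⟨⌈x⌉, mul_left_cancel₀ two_ne_zero (by rwa [two_mul, two_mul])⟩

lemma mem_range_of_floor_ceil_mul_add {q : ℕ} (hq : 1 < q)
    (hadd : ∀ k l : ℕ, 0 < k → 0 < l → k + l = q →
      ⌊x * k + x * l⌋ = ⌊x * k⌋ + ⌊x * l⌋ ∧ ⌈x * k + x * l⌉ = ⌈x * k⌉ + ⌈x * l⌉)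
    (htwo : 2 < q → ⌊x + x⌋ = ⌊x⌋ + ⌊x⌋ ∨ ⌈x + x⌉ = ⌈x⌉ + ⌈x⌉) :
    x ∈ range ((↑) : ℤ → R) := by
  have hsplit {k l : ℕ} (hk : 0 < k) (hl : 0 < l) (hkl : k + l = q) :=
    mem_range_or_mem_range_of_floor_ceil_add (hadd k l hk hl hkl).1 (hadd k l hk hl hkl).2
  obtain ⟨r, rfl⟩ := Nat.exists_eq_add_of_lt hq
  rcases hsplit (k := 1) (l := r + 1) one_pos (by omega) (by omega) with hx | hpred
  · simpa using hx
  rcases Nat.eq_zero_or_pos r with rfl | hr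
  · simpa using hpred
  rcases hsplit two_pos hr (by omega) with hdouble | hpred_pred
  · rw [Nat.cast_two, mul_two] at hdouble
    rcases htwo (by omega) with hfloor | hceil
    · exact mem_range_of_floor_add_self hfloor hdouble
    · exact mem_range_of_ceil_add_self hceil hdouble
  · have hsub : x * (r + 1 : ℕ) - x * r ∈ range ((↑) : ℤ → R) :=
      (Int.castAddHom R).range.sub_mem hpred hpred_pred
    rwa [Nat.cast_succ, mul_add_one, add_sub_cancel_left] at hsub

namespace IsDenom

variable {q k l : ℕ}

lemma ceil_add_ceil (hq : IsDenom y q) (hk : 0 < k) (hl : 0 < l) (hkl : k + l = q) :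
    ⌈y * k⌉ + ⌈y * l⌉ = ⌈y * q⌉ + 1 := by
  have hsum : y * k + y * l = y * q := by rw [← mul_add, ← Nat.cast_add, hkl]
  rw [← hsum]
  exact ceil_add_ceil_of_add_mem_range (hq.notMem_range hk (by omega)) (hsum ▸ hq.1.2)

lemma ceil_mul_add_or_ceil_neg_mul_add (hq : IsDenom y q) (hk : 0 < k) (hl : 0 < l)
    (hkl : k + l < q) :
    ⌈y * k⌉ + ⌈y * l⌉ = ⌈y * (k + l : ℕ)⌉ + 1 ∨
      ⌈-y * k⌉ + ⌈-y * l⌉ = ⌈-y * (k + l : ℕ)⌉ + 1 := by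
  have hmem := hq.notMem_range (by omega) hkl
  simp only [Nat.cast_add, mul_add, neg_mul, ← neg_add] at hmem ⊢
  exact ceil_add_ceil_or_ceil_neg_add_ceil_neg (hq.notMem_range hk (by omega))
    (hq.notMem_range hl (by omega)) hmem

end IsDenom

end FloorAdditivity

section Superadditive

lemma nsmul_le_map_nsmul_of_superadditive {M N : Type*} [AddMonoid M] [AddMonoid N] [Preorder N]
    [AddRightMono N] {f : M → N} (hf : ∀ x y, f x + f y ≤ f (x + y)) (x : M) {t : ℕ}
    (ht : 0 < t) : t • f x ≤ f (t • x) := by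
  induction t, ht using Nat.le_induction with
  | base => simp
  | succ t _ ih =>
    rw [succ_nsmul, succ_nsmul]
    exact (add_le_add_left ih _).trans (hf _ _)

end Superadditive

section MinSlope

/-- `y` is the minimum of the slopes `f k / k` over positive `k`, stated without division. -/
structure IsMinSlope {R : Type*} [Ring R] [LE R] (f : ℕ → ℤ) (y : R) : Prop where
  mul_le : ∀ k : ℕ, 0 < k → y * k ≤ f k
  exists_eq : ∃ k : ℕ, 0 < k ∧ y * k = f k

namespace IsMinSlope

variable {R : Type*} [Ring R] [LinearOrder R] {f g : ℕ → ℤ} {y : R} {q k l : ℕ}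

lemma exists_isDenom (h : IsMinSlope f y) : ∃ q, IsDenom y q := by
  classical
  obtain ⟨k, hk, hfk⟩ := h.exists_eq
  exact ⟨_, Nat.isLeast_find (p := fun k => 0 < k ∧ y * k ∈ range ((↑) : ℤ → R))
    ⟨k, hk, f k, hfk.symm⟩⟩

lemma ceil_le [FloorRing R] (h : IsMinSlope f y) (hk : 0 < k) : ⌈y * k⌉ ≤ f k :=
  Int.ceil_le.2 (h.mul_le k hk)

variable [IsStrictOrderedRing R]

lemma eq_apply_one_of_superadditive (h : IsMinSlope f y) (hf : ∀ k l, f k + f l ≤ f (k + l)) :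
    y = f 1 := by
  obtain ⟨k, hk, hfk⟩ := h.exists_eq
  refine le_antisymm (by simpa using h.mul_le 1 one_pos) ?_
  have hle : k * f 1 ≤ f k := by simpa using nsmul_le_map_nsmul_of_superadditive hf 1 hk
  have hle_cast : (f 1 : R) * k ≤ y * k := by
    rw [hfk, ← Nat.cast_comm]
    exact_mod_cast hle
  exact le_of_mul_le_mul_right hle_cast (Nat.cast_pos.2 hk)

/- If the slope were not attained at `q`, then at the first `k` where it is attained one has `q < k`
and both `f q` and `f (k - q)` exceed their lower bounds by at least one. -/
lemma apply_denom (h : IsMinSlope f y) (hf : ∀ k l, f k + f l ≤ f (k + l) + 1)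
    (hq : IsDenom y q) : f q = y * q := by
  classical
  obtain ⟨⟨hk, hfk⟩, hmin⟩ := Nat.isLeast_find h.exists_eq
  set k := Nat.find h.exists_eq
  obtain ⟨hqpos, p, hp⟩ := hq.1
  rcases (hq.2 ⟨hk, f k, hfk.symm⟩ : q ≤ k).eq_or_lt with hqk | hqk
  · rw [hqk, hfk]
  have hstrict {l : ℕ} (hl : 0 < l) (hlk : l < k) : y * l < f l :=
    (h.mul_le l hl).lt_of_ne fun heq => hlk.not_ge (hmin ⟨hl, heq⟩)
  have hfq : p < f q := by
    have := hstrict hqpos hqk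
    rw [← hp] at this
    exact_mod_cast this
  have hfsub : f k - p < f (k - q) := by
    have := hstrict (l := k - q) (by omega) (by omega)
    rw [Nat.cast_sub hqk.le, mul_sub, hfk, ← hp] at this
    exact_mod_cast this
  have hdefect := hf q (k - q)
  rw [Nat.add_sub_cancel' hqk.le] at hdefect
  omega

lemma eq_apply_one_of_mem_range (h : IsMinSlope f y) (hf : ∀ k l, f k + f l ≤ f (k + l) + 1)
    (hy : y ∈ range ((↑) : ℤ → R)) : y = f 1 := by
  have hone : IsDenom y 1 := ⟨⟨one_pos, by simpa using hy⟩, fun _ hk => hk.1⟩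
  simpa using (h.apply_denom hf hone).symm

variable [FloorRing R]

lemma apply_eq_ceil (h : IsMinSlope f y) (hf : ∀ k l, f k + f l ≤ f (k + l) + 1)
    (hq : IsDenom y q) (hk : 0 < k) (hkq : k ≤ q) : f k = ⌈y * k⌉ := by
  have hfq : f q = ⌈y * q⌉ := by rw [← h.apply_denom hf hq, Int.ceil_intCast]
  rcases hkq.eq_or_lt with rfl | hkq
  · exact hfq
  have hsub : 0 < q - k := by omega
  have hceil := hq.ceil_add_ceil hk hsub (by omega)
  have hdefect := hf k (q - k)
  rw [Nat.add_sub_cancel' hkq.le] at hdefect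
  have := h.ceil_le hk
  have := h.ceil_le hsub
  omega

lemma add_eq_of_add_eq_denom (h : IsMinSlope f y) (hf : ∀ k l, f k + f l ≤ f (k + l) + 1)
    (hq : IsDenom y q) (hk : 0 < k) (hl : 0 < l) (hkl : k + l = q) :
    f k + f l = f (k + l) + 1 := by
  rw [h.apply_eq_ceil hf hq hk (by omega), h.apply_eq_ceil hf hq hl (by omega), hkl,
    h.apply_eq_ceil hf hq hq.1.1 le_rfl]
  exact hq.ceil_add_ceil hk hl hkl

lemma add_eq_or_add_eq_of_add_lt_denom (h : IsMinSlope f y) (h' : IsMinSlope g (-y))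
    (hf : ∀ k l, f k + f l ≤ f (k + l) + 1) (hg : ∀ k l, g k + g l ≤ g (k + l) + 1)
    (hq : IsDenom y q) (hk : 0 < k) (hl : 0 < l) (hkl : k + l < q) :
    f k + f l = f (k + l) + 1 ∨ g k + g l = g (k + l) + 1 := by
  have hfceil {j : ℕ} (hj : 0 < j) (hjq : j ≤ q) := h.apply_eq_ceil hf hq hj hjq
  have hgceil {j : ℕ} (hj : 0 < j) (hjq : j ≤ q) := h'.apply_eq_ceil hg hq.neg hj hjq
  have hkq : k ≤ q := by omega
  have hlq : l ≤ q := by omega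
  rw [hfceil hk hkq, hfceil hl hlq, hfceil (by omega) hkl.le,
    hgceil hk hkq, hgceil hl hlq, hgceil (by omega) hkl.le]
  exact hq.ceil_mul_add_or_ceil_neg_mul_add hk hl hkl

end IsMinSlope

variable {K : Type*} [Field K] [LinearOrder K] [IsStrictOrderedRing K] {F : ℕ → K} {f : ℕ → ℤ}
  {y : K}

lemma isMinSlope_of_isLeast (hF : ∀ k : ℕ, 0 < k → F k = f k / k)
    (hy : IsLeast {x : K | ∃ k : ℕ, 0 < k ∧ x = F k} y) : IsMinSlope f y := by
  obtain ⟨⟨k, hk, rfl⟩, hle⟩ := hy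
  refine ⟨fun l hl => ?_, k, hk, ?_⟩
  · rw [← le_div_iff₀ (Nat.cast_pos.2 hl), ← hF l hl]
    exact hle ⟨l, hl, rfl⟩
  · rw [hF k hk, div_mul_cancel₀ _ (Nat.cast_ne_zero.2 hk.ne')]

lemma isMinSlope_neg_of_isGreatest (hF : ∀ k : ℕ, 0 < k → F k = -(f k / k))
    (hy : IsGreatest {x : K | ∃ k : ℕ, 0 < k ∧ x = F k} y) : IsMinSlope f (-y) := by
  refine isMinSlope_of_isLeast (F := -F) (fun k hk => by simp [hF k hk]) ?_
  obtain ⟨⟨k, hk, rfl⟩, hge⟩ := hy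
  refine ⟨⟨k, hk, rfl⟩, ?_⟩
  rintro _ ⟨l, hl, rfl⟩
  exact neg_le_neg (hge ⟨l, hl, rfl⟩)

end MinSlope

section SlopeNum

variable {R ι κ : Type*} [Ring R] [LinearOrder R] [FloorRing R] [Fintype ι] [Fintype κ]

/-- The integer `1 + ∑ ⌊dᵢk⌋ + ∑ (⌈aⱼk⌉ - 1)`, whose quotient by `-k` is `y₋(k)`. The numerator of
`y₊(k)` is the same expression in `-d` and `-b`. -/
def slopeNum (d : ι → R) (a : κ → R) (k : ℕ) : ℤ :=
  1 + ∑ i, ⌊d i * k⌋ + ∑ j, (⌈a j * k⌉ - 1)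

variable [IsStrictOrderedRing R] (d : ι → R) (a : κ → R)

lemma floor_mul_add_floor_mul_le (x : R) (k l : ℕ) :
    ⌊x * k⌋ + ⌊x * l⌋ ≤ ⌊x * (k + l : ℕ)⌋ := by
  simpa only [Nat.cast_add, mul_add] using Int.le_floor_add (x * k) (x * l)

lemma ceil_mul_sub_one_add_le (x : R) (k l : ℕ) :
    (⌈x * k⌉ - 1) + (⌈x * l⌉ - 1) ≤ ⌈x * (k + l : ℕ)⌉ - 1 := by
  have := Int.ceil_add_ceil_le (x * k) (x * l)
  rw [Nat.cast_add, mul_add]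
  omega

lemma sum_floor_add_sum_floor_le (k l : ℕ) :
    ∑ i, ⌊d i * k⌋ + ∑ i, ⌊d i * l⌋ ≤ ∑ i, ⌊d i * (k + l : ℕ)⌋ := by
  rw [← Finset.sum_add_distrib]
  exact Finset.sum_le_sum fun i _ => floor_mul_add_floor_mul_le (d i) k l

lemma sum_ceil_sub_one_add_le (k l : ℕ) :
    ∑ j, (⌈a j * k⌉ - 1) + ∑ j, (⌈a j * l⌉ - 1) ≤ ∑ j, (⌈a j * (k + l : ℕ)⌉ - 1) := by
  rw [← Finset.sum_add_distrib]
  exact Finset.sum_le_sum fun j _ => ceil_mul_sub_one_add_le (a j) k l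

lemma slopeNum_add_le (k l : ℕ) :
    slopeNum d a k + slopeNum d a l ≤ slopeNum d a (k + l) + 1 := by
  have := sum_floor_add_sum_floor_le d k l
  have := sum_ceil_sub_one_add_le a k l
  simp only [slopeNum]
  omega

variable {d a}

lemma slopeNum_superadditive_of_mem_range {j : κ} (hj : a j ∈ range ((↑) : ℤ → R)) (k l : ℕ) :
    slopeNum d a k + slopeNum d a l ≤ slopeNum d a (k + l) := by
  have hstrict : ∑ j, (⌈a j * k⌉ - 1) + ∑ j, (⌈a j * l⌉ - 1) <
      ∑ j, (⌈a j * (k + l : ℕ)⌉ - 1) := by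
    rw [← Finset.sum_add_distrib]
    refine Finset.sum_lt_sum (fun j _ => ceil_mul_sub_one_add_le (a j) k l)
      ⟨j, Finset.mem_univ j, ?_⟩
    obtain ⟨z, hz⟩ := hj
    have hceil (t : ℕ) : ⌈a j * t⌉ = z * t := by
      rw [← hz, ← Int.cast_natCast, ← Int.cast_mul, Int.ceil_intCast]
    rw [hceil, hceil, hceil, Nat.cast_add, mul_add]
    omega
  have := sum_floor_add_sum_floor_le d k l
  simp only [slopeNum]
  omega

lemma floor_add_of_slopeNum_add_eq {k l : ℕ}
    (h : slopeNum d a k + slopeNum d a l = slopeNum d a (k + l) + 1) (i : ι) :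
    ⌊d i * k + d i * l⌋ = ⌊d i * k⌋ + ⌊d i * l⌋ := by
  have hsum : ∑ i, (⌊d i * k⌋ + ⌊d i * l⌋) = ∑ i, ⌊d i * (k + l : ℕ)⌋ := by
    have := sum_floor_add_sum_floor_le d k l
    have := sum_ceil_sub_one_add_le a k l
    simp only [slopeNum] at h
    rw [Finset.sum_add_distrib]
    omega
  rw [← mul_add, ← Nat.cast_add]
  exact ((Finset.sum_eq_sum_iff_of_le fun i _ => floor_mul_add_floor_mul_le (d i) k l).1 hsum i
    (Finset.mem_univ i)).symm

lemma ceil_add_of_slopeNum_neg_add_eq {k l : ℕ}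
    (h : slopeNum (-d) a k + slopeNum (-d) a l = slopeNum (-d) a (k + l) + 1) (i : ι) :
    ⌈d i * k + d i * l⌉ = ⌈d i * k⌉ + ⌈d i * l⌉ := by
  have hfloor := floor_add_of_slopeNum_add_eq h i
  simp only [Pi.neg_apply, neg_mul, ← neg_add, Int.floor_neg] at hfloor
  omega

end SlopeNum

section CommonEndpoint

variable {R ι κ κ' : Type*} [Ring R] [LinearOrder R] [IsStrictOrderedRing R] [FloorRing R]
  [Fintype ι] [Fintype κ] [Fintype κ'] {d : ι → R} {a : κ → R} {b : κ' → R} {y : R}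

lemma IsMinSlope.mem_range_of_coeff_mem_range (h : IsMinSlope (slopeNum d a) y) {j : κ}
    (hj : a j ∈ range ((↑) : ℤ → R)) : y ∈ range ((↑) : ℤ → R) :=
  ⟨_, (h.eq_apply_one_of_superadditive (slopeNum_superadditive_of_mem_range hj)).symm⟩

lemma IsMinSlope.mem_range_of_coeff_notMem_range (hA : IsMinSlope (slopeNum d a) y)
    (hB : IsMinSlope (slopeNum (-d) b) (-y)) {i : ι} (hi : d i ∉ range ((↑) : ℤ → R)) :
    y ∈ range ((↑) : ℤ → R) := by
  obtain ⟨q, hq⟩ := hA.exists_isDenom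
  rcases (Nat.succ_le_of_lt hq.1.1).eq_or_lt with hone | hlt
  · simpa [← hone] using hq.1.2
  have hAadd := slopeNum_add_le d a
  have hBadd := slopeNum_add_le (-d) b
  refine absurd (mem_range_of_floor_ceil_mul_add hlt (fun k l hk hl hkl => ?_) fun htwo => ?_) hi
  · exact ⟨floor_add_of_slopeNum_add_eq (hA.add_eq_of_add_eq_denom hAadd hq hk hl hkl) i,
      ceil_add_of_slopeNum_neg_add_eq (hB.add_eq_of_add_eq_denom hBadd hq.neg hk hl hkl) i⟩
  · have hor := hA.add_eq_or_add_eq_of_add_lt_denom hB hAadd hBadd hq one_pos one_pos htwo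
    simpa only [Nat.cast_one, mul_one] using
      hor.imp (floor_add_of_slopeNum_add_eq · i) (ceil_add_of_slopeNum_neg_add_eq · i)

end CommonEndpoint

section Endpoints

variable {K ι κ : Type*} [Field K] [LinearOrder K] [FloorRing K] [Fintype ι] [Fintype κ]

lemma neg_slopeNum_div (d : ι → K) (a : κ → K) (k : ℕ) :
    -(1 / (k : K)) * (1 + (∑ i, (⌊d i * (k : K)⌋ : K)) + ∑ j, ((⌈a j * (k : K)⌉ : K) - 1)) =
      -(slopeNum d a k / k) := by
  simp only [slopeNum]
  push_cast
  ring

lemma slopeNum_neg_div [IsStrictOrderedRing K] (d : ι → K) (b : κ → K) (k : ℕ) :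
    -(1 / (k : K)) * (-1 + (∑ i, (⌈d i * (k : K)⌉ : K)) + ∑ j, ((⌊b j * (k : K)⌋ : K) + 1)) =
      slopeNum (-d) (-b) k / k := by
  simp only [slopeNum, Pi.neg_apply, neg_mul, Int.floor_neg, Int.ceil_neg]
  push_cast
  simp only [Finset.sum_neg_distrib, Finset.sum_sub_distrib, Finset.sum_add_distrib]
  ring

end Endpoints

theorem stmt_10_general {K ι κ κ' : Type*} [Field K] [LinearOrder K] [IsStrictOrderedRing K]
    [FloorRing K] [Fintype ι] [Fintype κ] [Fintype κ'] (d : ι → K) (a : κ → K) (b : κ' → K)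
    (hpos : 0 < Nat.card {i // ¬∃ z : ℤ, (z : K) = d i}
      + (Nat.card {j // ∃ z : ℤ, (z : K) = a j} + Nat.card {j // ∃ z : ℤ, (z : K) = b j}))
    (fneg fpos : ℕ → K)
    (hfneg : ∀ k : ℕ, 0 < k →
      fneg k = -(1 / (k : K)) * (1 + (∑ i, (⌊d i * (k : K)⌋ : K))
        + ∑ j, ((⌈a j * (k : K)⌉ : K) - 1)))
    (hfpos : ∀ k : ℕ, 0 < k →
      fpos k = -(1 / (k : K)) * (-1 + (∑ i, (⌈d i * (k : K)⌉ : K))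
        + ∑ j, ((⌊b j * (k : K)⌋ : K) + 1)))
    (y : K) (hyneg : IsGreatest {x : K | ∃ k : ℕ, 0 < k ∧ x = fneg k} y)
    (hypos : IsLeast {x : K | ∃ k : ℕ, 0 < k ∧ x = fpos k} y) :
    y = fneg 1 ∧ y = fpos 1 ∧ ∃ z : ℤ, (z : K) = y := by
  simp only [neg_slopeNum_div, slopeNum_neg_div] at hfneg hfpos
  have hA : IsMinSlope (slopeNum d a) (-y) := isMinSlope_neg_of_isGreatest hfneg hyneg
  have hB : IsMinSlope (slopeNum (-d) (-b)) y := isMinSlope_of_isLeast hfpos hypos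
  have hy : y ∈ range ((↑) : ℤ → K) := by
    simp only [Nat.card_pos_iff, Nat.add_pos_iff_pos_or_pos, nonempty_subtype] at hpos
    rcases hpos with ⟨⟨i, hi⟩, -⟩ | ⟨⟨j, hj⟩, -⟩ | ⟨⟨j, hj⟩, -⟩
    · exact neg_mem_range_intCast.1
        (hA.mem_range_of_coeff_notMem_range (by rwa [neg_neg]) hi)
    · exact neg_mem_range_intCast.1 (hA.mem_range_of_coeff_mem_range hj)
    · exact hB.mem_range_of_coeff_mem_range (neg_mem_range_intCast.2 hj)
  have hA_one := hA.eq_apply_one_of_mem_range (slopeNum_add_le d a) (neg_mem_range_intCast.2 hy)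
  have hB_one := hB.eq_apply_one_of_mem_range (slopeNum_add_le (-d) (-b)) hy
  exact ⟨by simp [hfneg, ← hA_one], by simp [hfpos, ← hB_one], hy⟩

/-- Proposition 4.6: not a solid torus, `n̄_D + N_G > 0`; if the greatest element `y₋`
of `{y₋(k)}` equals the least element `y₊` of `{y₊(k)}`, then
`y₋ = y₋(1)`, `y₊ = y₊(1)`, and `y₋ ∈ ℤ`. -/
theorem stmt_10 (n m : ℕ) (d : Fin n → ℚ) (a b : Fin m → ℚ)
    (hnst : 1 ≤ m ∨ ∃ i j : Fin n, i ≠ j ∧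
      (¬∃ z : ℤ, (z:ℚ) = d i) ∧ (¬∃ z : ℤ, (z:ℚ) = d j))
    (hpos : 0 < Nat.card {i : Fin n // ¬∃ z : ℤ, (z:ℚ) = d i}
      + (Nat.card {j : Fin m // ∃ z : ℤ, (z:ℚ) = a j}
        + Nat.card {j : Fin m // ∃ z : ℤ, (z:ℚ) = b j}))
    (fneg fpos : ℕ → ℚ)
    (hfneg : ∀ k : ℕ, 0 < k →
      fneg k = -(1/(k:ℚ)) * (1 + (∑ i, (⌊d i * (k:ℚ)⌋ : ℚ))
        + ∑ j, ((⌈a j * (k:ℚ)⌉ : ℚ) - 1)))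
    (hfpos : ∀ k : ℕ, 0 < k →
      fpos k = -(1/(k:ℚ)) * (-1 + (∑ i, (⌈d i * (k:ℚ)⌉ : ℚ))
        + ∑ j, ((⌊b j * (k:ℚ)⌋ : ℚ) + 1)))
    (yneg ypos : ℚ)
    (hyneg : IsGreatest {x : ℚ | ∃ k : ℕ, 0 < k ∧ x = fneg k} yneg)
    (hypos : IsLeast {x : ℚ | ∃ k : ℕ, 0 < k ∧ x = fpos k} ypos)
    (heq : yneg = ypos) :
    yneg = fneg 1 ∧ ypos = fpos 1 ∧ ∃ z : ℤ, (z:ℚ) = yneg := by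
  subst heq
  exact stmt_10_general d a b hpos fneg fpos hfneg hfpos yneg hyneg hypos
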